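/- There exist an integer n ≥ 3 and a sequential hierarchy G on the agent set N = {1,…,n} such that G is not an equilibrium network for non-consensual agents for any choice of utility parameters (γ,H,c). -/

import Mathlib

/-!
A sequential hierarchy may have a single level, and its one strongly connected component need not
be complete. The witness is the undirected path `0 - 1 - 2` on three agents. Agent `0` gains from
adding the edge `(0, 2)`: the graph stays strongly connected, so the level of `0` remains `0`
(`level_eq_zero`); no single edge points to `0` before or after, so there is no cost term; and the
out-degree rises from one to two. The utility of `0` thus increases by `γ > 0`, whatever the
parameters.
-/

open Finset MeasureTheory ProbabilityTheory

attribute [local instance 10] Classical.propDecidable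

noncomputable section

/-- A digraph on the agent set `Fin n`: a finite set of ordered pairs (directed edges). -/
abbrev Network (n : ℕ) := Finset (Fin n × Fin n)

variable {n : ℕ}

/-- Edges only join distinct nodes. -/
def validNetwork (G : Network n) : Prop := ∀ p ∈ G, p.1 ≠ p.2

/-- Out-neighborhood `N_out(i,G)`. -/
def Nout (G : Network n) (i : Fin n) : Finset (Fin n) := univ.filter fun j => (i, j) ∈ G

/-- The set of subordinates `N_in^s(i,G)`. -/
def NinS (G : Network n) (i : Fin n) : Finset (Fin n) :=
  univ.filter fun j => (j, i) ∈ G ∧ (i, j) ∉ G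

/-- `P_i(G,k) = {i} ∪ {j : kj ∈ G and ij, ji ∈ G}`. -/
def Pset (G : Network n) (i k : Fin n) : Finset (Fin n) :=
  insert i (univ.filter fun j => (k, j) ∈ G ∧ (i, j) ∈ G ∧ (j, i) ∈ G)

/-- `P_i(G) = ⋂_{k ∈ N_in^s(i,G)} P_i(G,k)`. -/
def Pall (G : Network n) (i : Fin n) : Finset (Fin n) :=
  univ.filter fun j => ∀ k ∈ NinS G i, j ∈ Pset G i k

/-- Reachability along directed edges. -/
def reach (G : Network n) : Fin n → Fin n → Prop :=
  Relation.ReflTransGen fun a b => (a, b) ∈ G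

/-- `i` and `j` belong to the same strongly connected component. -/
def sameSCC (G : Network n) (i j : Fin n) : Prop := reach G i j ∧ reach G j i

/-- The strongly connected component `Γ(i,G)` of `i`. -/
def sccSet (G : Network n) (i : Fin n) : Finset (Fin n) := univ.filter fun j => sameSCC G i j

/-- An arc of the condensation `C(G)`, between the SCC of `a` and the SCC of `b`. -/
def condArc (G : Network n) (a b : Fin n) : Prop :=
  ¬ sameSCC G a b ∧ ∃ a' b' : Fin n, sameSCC G a a' ∧ sameSCC G b b' ∧ (a', b') ∈ G

/-- The SCC of `a` is a source of the condensation `C(G)`. -/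
def isSourceSCC (G : Network n) (a : Fin n) : Prop := ∀ b, ¬ condArc G b a

/-- The level `ℓ_i(C(G))`: the largest number of arcs on a directed path in the
condensation `C(G)` from a source of `C(G)` to the SCC of `i`. -/
def level (G : Network n) (i : Fin n) : ℕ :=
  sSup {m : ℕ | ∃ f : ℕ → Fin n, isSourceSCC G (f 0) ∧ sameSCC G (f m) i ∧
    ∀ t, t < m → condArc G (f t) (f (t + 1))}

/-- The utility `u_i(G)` of agent `i` in the network `G`. -/
def utility (γ c : ℝ) (H : ℕ → ℝ) (G : Network n) (i : Fin n) : ℝ :=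
  ((Nout G i).card : ℝ) * γ + H (level G i)
    - c * ∑ k ∈ NinS G i, (1 : ℝ) / ((Pset G i k).card : ℝ)

/-- Utility parameters: `γ > 0`, `c > 0`, `H` strictly increasing with `H 0 ≥ 0`. -/
def UtilityParams (γ c : ℝ) (H : ℕ → ℝ) : Prop :=
  0 < γ ∧ 0 < c ∧ StrictMono H ∧ 0 ≤ H 0

/-- Equilibrium network for non-consensual agents. -/
def eqNonConsensual (γ c : ℝ) (H : ℕ → ℝ) (G : Network n) : Prop :=
  ∀ i j : Fin n, i ≠ j →
    ((i, j) ∈ G → utility γ c H (G.erase (i, j)) i < utility γ c H G i) ∧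
    ((i, j) ∉ G → utility γ c H (insert (i, j) G) i < utility γ c H G i)

/-- Equilibrium network for consensual agents. -/
def eqConsensual (γ c : ℝ) (H : ℕ → ℝ) (G : Network n) : Prop :=
  ∀ i j : Fin n, i ≠ j →
    ((i, j) ∈ G → utility γ c H (G.erase (i, j)) i < utility γ c H G i) ∧
    ((i, j) ∉ G →
      utility γ c H (insert (i, j) G) i < utility γ c H G i ∨
        (utility γ c H G i ≤ utility γ c H (insert (i, j) G) i ∧
          utility γ c H (insert (i, j) G) j < utility γ c H G j))

/-- `G` has no directed cycles: every edge joining two nodes of the same SCC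
is an undirected edge. -/
def noDirectedCycles (G : Network n) : Prop :=
  ∀ i j : Fin n, (i, j) ∈ G → sameSCC G i j → (j, i) ∈ G

/-- Reachability forgetting edge directions. -/
def weakReach (G : Network n) : Fin n → Fin n → Prop :=
  Relation.ReflTransGen fun a b => (a, b) ∈ G ∨ (b, a) ∈ G

/-- `G` is weakly connected. -/
def weaklyConnected (G : Network n) : Prop := ∀ i j : Fin n, weakReach G i j

/-- Every SCC of `G` is a complete connected component: any two distinct nodes of
the same SCC are joined by an undirected edge. -/
def completeSCCs (G : Network n) : Prop :=
  ∀ i j : Fin n, i ≠ j → sameSCC G i j → (i, j) ∈ G ∧ (j, i) ∈ G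

/-- The undirected edge `ij, ji ∈ G` is critical: `Γ(i,G) ≠ Γ(i, G - ij)`. -/
def criticalEdge (G : Network n) (i j : Fin n) : Prop :=
  (i, j) ∈ G ∧ (j, i) ∈ G ∧
    {k : Fin n | sameSCC G i k} ≠ {k : Fin n | sameSCC (G.erase (i, j)) i k}

/-- `L_ℓ(G) = |{j : ℓ_j(C(G)) < ℓ}|`. -/
def Lcard (G : Network n) (ℓ : ℕ) : ℕ :=
  (univ.filter fun j : Fin n => level G j < ℓ).card

/-- `G` is a sequential hierarchy: weakly connected, no directed cycles, exactly one
SCC per level, and (if more than one level) every node has a single edge towards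
every node of strictly higher level. -/
def seqHierarchy (G : Network n) : Prop :=
  weaklyConnected G ∧ noDirectedCycles G ∧
  (∀ i j : Fin n, level G i = level G j → sameSCC G i j) ∧
  ((∃ i j : Fin n, level G i ≠ level G j) →
    ∀ i j : Fin n, level G i < level G j → (i, j) ∈ G ∧ (j, i) ∉ G)

/-- The better-response update of `G` at the ordered pair `p = (i,j)`. -/
def brUpdate (consensual : Bool) (γ c : ℝ) (H : ℕ → ℝ) (G : Network n)
    (p : Fin n × Fin n) : Network n :=
  if p ∈ G then
    if utility γ c H G p.1 ≤ utility γ c H (G.erase p) p.1 then G.erase p else G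
  else if consensual then
    if utility γ c H G p.1 ≤ utility γ c H (insert p G) p.1 ∧
        utility γ c H G p.2 ≤ utility γ c H (insert p G) p.2 then insert p G else G
  else
    if utility γ c H G p.1 ≤ utility γ c H (insert p G) p.1 then insert p G else G

/-- Equilibrium network for the given agent type. -/
def equilibrium (consensual : Bool) (γ c : ℝ) (H : ℕ → ℝ) (G : Network n) : Prop :=
  if consensual then eqConsensual γ c H G else eqNonConsensual γ c H G


/-- In a strongly connected network the condensation has no arcs, so every level is `0`. -/
theorem level_eq_zero (G : Network n) (h : ∀ a b, reach G a b) (i : Fin n) : level G i = 0 := by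
  have hs : {m : ℕ | ∃ f : ℕ → Fin n, isSourceSCC G (f 0) ∧ sameSCC G (f m) i ∧
      ∀ t, t < m → condArc G (f t) (f (t + 1))} ⊆ {0} := by
    rintro m ⟨f, -, -, hf⟩
    by_contra hm
    exact (hf 0 (Nat.pos_of_ne_zero hm)).1 ⟨h _ _, h _ _⟩
  unfold level
  rcases Set.subset_singleton_iff_eq.mp hs with h0 | h0 <;> rw [h0] <;> simp

/-- The undirected path `0 - 1 - 2`. -/
def pathNet : Network 3 := {(0, 1), (1, 0), (1, 2), (2, 1)}

/-- Any network containing the path `0 - 1 - 2` is strongly connected. -/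
theorem reach_of_pathNet_subset (G : Network 3) (h : pathNet ⊆ G) (a b : Fin 3) : reach G a b := by
  have e01 : reach G 0 1 := .single (h (by simp [pathNet]))
  have e10 : reach G 1 0 := .single (h (by simp [pathNet]))
  have e12 : reach G 1 2 := .single (h (by simp [pathNet]))
  have e21 : reach G 2 1 := .single (h (by simp [pathNet]))
  fin_cases a <;> fin_cases b
  exacts [.refl, e01, e01.trans e12, e10, .refl, e12, e21.trans e10, e21, .refl]

theorem utility_pathNet (γ c : ℝ) (H : ℕ → ℝ) : utility γ c H pathNet 0 = γ + H 0 := by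
  have h1 : Nout pathNet 0 = {1} := by
    ext j; fin_cases j <;> simp [Nout, pathNet]
  have h2 : NinS pathNet 0 = ∅ := by
    ext j; fin_cases j <;> simp [NinS, pathNet]
  rw [utility, h1, h2, level_eq_zero _ (reach_of_pathNet_subset _ subset_rfl)]
  simp

theorem utility_insert_pathNet (γ c : ℝ) (H : ℕ → ℝ) :
    utility γ c H (insert (0, 2) pathNet) 0 = 2 * γ + H 0 := by
  have h1 : Nout (insert (0, 2) pathNet) 0 = {1, 2} := by
    ext j; fin_cases j <;> simp [Nout, pathNet]
  have h2 : NinS (insert (0, 2) pathNet) 0 = ∅ := by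
    ext j; fin_cases j <;> simp [NinS, pathNet]
  rw [utility, h1, h2, level_eq_zero _ (reach_of_pathNet_subset _ (subset_insert _ _))]
  simp

/-- there is a sequential hierarchy that is an equilibrium network for
non-consensual agents for no choice of utility parameters. -/
theorem stmt5 :
    ∃ (n : ℕ), 3 ≤ n ∧ ∃ G : Network n, validNetwork G ∧ seqHierarchy G ∧
      ∀ (γ c : ℝ) (H : ℕ → ℝ), UtilityParams γ c H → ¬ eqNonConsensual γ c H G := by
  have hr : ∀ a b, reach pathNet a b := reach_of_pathNet_subset _ subset_rfl
  refine ⟨3, le_rfl, pathNet, ?_, ⟨?_, ?_, ?_, ?_⟩, ?_⟩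
  · simp [validNetwork, pathNet]
  · exact fun i j => Relation.ReflTransGen.mono (fun _ _ => Or.inl) _ _ (hr i j)
  · intro i j hij _
    fin_cases i <;> fin_cases j <;> simp_all [pathNet]
  · exact fun i j _ => ⟨hr i j, hr j i⟩
  · rintro - i j hij
    simp [level_eq_zero _ hr] at hij
  · rintro γ c H ⟨hγ, -⟩ heq
    have hlt := (heq 0 2 (by simp)).2 (by simp [pathNet])
    rw [utility_pathNet, utility_insert_pathNet] at hlt
    linarith

end
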